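/- arXiv:0806.0901 — 2 statements merged into one kernel-verified Lean document; each statement's English description precedes it below -/
import Mathlib

section
/- Let A_q(α) be the unital associative 𝕂-algebra with generators x, y, z, z⁻¹ and relations zz⁻¹ = 1 = z⁻¹z, zx = q²xz, zy = q⁻²yz, x³y − [3]x²yx + [3]xyx² − yx³ = α·x²z⁻², xy³ − [3]yxy² + [3]y²xy − y³x = α·z⁻²y², and let π : ℱ → A_q(α) be the canonical quotient map from the free unital associative 𝕂-algebra ℱ on x, y, z, z⁻¹. Then A_q(α) is spanned, as a 𝕂-vector space, by the elements π(w zʲ) where w ranges over the irreducible words in x, y and j ranges over ℤ. -/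
/-!
Filter `A_q(α)` by the degree in `x, y`: `lowDeg n` is the span of the `w zʲ` with `w` a word of
length less than `n`. Moving powers of `z` to the right only produces scalars, so this is an
algebra filtration, and it suffices to rewrite every word as a combination of irreducible words of
the same length modulo terms of lower degree; induction on the length then finishes the proof.

Modulo lower degree the two cubic relations are the `q`-Serre relations. With `L`, `R` the left and
right multiplications by one letter `u` and `v` the other letter, they say
`(L - q² R)(L - R)(L - q⁻² R) v ≡ 0`. A twisted Leibniz rule for the operators `L - c R` turns this
into the higher order relation `∏_{|t| ≤ j} (L - q^{2t} R) vʲ ≡ 0` (`IsFilt.higher_serre`). Hence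
`f(L, R) vʲ ≡ 0` for every homogeneous `f` vanishing at the distinct nodes `(q^{2t} : 1)`
(`IsFilt.homEval_mem`). An invertible Vandermonde matrix supplies such an `f` that expresses
`uⁱ vʲ uᵏ`, where `i ≥ j < k`, through the `uʳ vʲ uˢ` with `r + s = i + k` and `r < j` or `s ≤ j`
(`IsFilt.straighten`).

This straightening applies exactly at the positions that make a word reducible. It either strictly
increases the sum of the squares of the block lengths, which is at most the square of the length of
the word, or swaps the outer blocks and moves the longer one to the front, which lowers the
position-weighted sum of the block lengths. So the rewriting terminates (`word_induction`).
-/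

noncomputable section

open FreeAlgebra

inductive AqRel (𝕂 : Type*) [Field 𝕂] (q α : 𝕂) :
    FreeAlgebra 𝕂 (Fin 4) → FreeAlgebra 𝕂 (Fin 4) → Prop
  | zzi : AqRel 𝕂 q α (ι 𝕂 (2 : Fin 4) * ι 𝕂 (3 : Fin 4)) 1
  | ziz : AqRel 𝕂 q α (ι 𝕂 (3 : Fin 4) * ι 𝕂 (2 : Fin 4)) 1
  | zx : AqRel 𝕂 q α (ι 𝕂 (2 : Fin 4) * ι 𝕂 (0 : Fin 4))
      (q ^ 2 • (ι 𝕂 (0 : Fin 4) * ι 𝕂 (2 : Fin 4)))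
  | zy : AqRel 𝕂 q α (ι 𝕂 (2 : Fin 4) * ι 𝕂 (1 : Fin 4))
      (q⁻¹ ^ 2 • (ι 𝕂 (1 : Fin 4) * ι 𝕂 (2 : Fin 4)))
  | serre1 : AqRel 𝕂 q α
      (ι 𝕂 (0 : Fin 4) ^ 3 * ι 𝕂 (1 : Fin 4)
        - ((q ^ 3 - q⁻¹ ^ 3) / (q - q⁻¹)) • (ι 𝕂 (0 : Fin 4) ^ 2 * ι 𝕂 (1 : Fin 4) * ι 𝕂 (0 : Fin 4))
        + ((q ^ 3 - q⁻¹ ^ 3) / (q - q⁻¹)) • (ι 𝕂 (0 : Fin 4) * ι 𝕂 (1 : Fin 4) * ι 𝕂 (0 : Fin 4) ^ 2)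
        - ι 𝕂 (1 : Fin 4) * ι 𝕂 (0 : Fin 4) ^ 3)
      (α • (ι 𝕂 (0 : Fin 4) ^ 2 * ι 𝕂 (3 : Fin 4) ^ 2))
  | serre2 : AqRel 𝕂 q α
      (ι 𝕂 (0 : Fin 4) * ι 𝕂 (1 : Fin 4) ^ 3
        - ((q ^ 3 - q⁻¹ ^ 3) / (q - q⁻¹)) • (ι 𝕂 (1 : Fin 4) * ι 𝕂 (0 : Fin 4) * ι 𝕂 (1 : Fin 4) ^ 2)
        + ((q ^ 3 - q⁻¹ ^ 3) / (q - q⁻¹)) • (ι 𝕂 (1 : Fin 4) ^ 2 * ι 𝕂 (0 : Fin 4) * ι 𝕂 (1 : Fin 4))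
        - ι 𝕂 (1 : Fin 4) ^ 3 * ι 𝕂 (0 : Fin 4))
      (α • (ι 𝕂 (3 : Fin 4) ^ 2 * ι 𝕂 (1 : Fin 4) ^ 2))

/-- The product in the free algebra corresponding to a word in the letters x, y
(`true` codes the letter x, `false` codes the letter y). -/
def wordProd (𝕂 : Type*) [Field 𝕂] (w : List Bool) : FreeAlgebra 𝕂 (Fin 4) :=
  (w.map (fun b => if b then ι 𝕂 (0 : Fin 4) else ι 𝕂 (1 : Fin 4))).prod

/-- Auxiliary function computing the signature (list of lengths of maximal blocks). -/
def sigAux : Bool → ℕ → List Bool → List ℕ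
  | _, n, [] => [n]
  | a, n, b :: t => if b = a then sigAux a (n + 1) t else n :: sigAux b 1 t

/-- The signature of a word. -/
def signature : List Bool → List ℕ
  | [] => []
  | a :: t => sigAux a 1 t

/-- A word is reducible when its signature (i₁, …, i_s) has a position η with
2 ≤ η ≤ s − 1 and i_{η−1} ≥ i_η < i_{η+1}. -/
def WordReducible (w : List Bool) : Prop :=
  ∃ (pre suf : List ℕ) (p r s : ℕ),
    signature w = pre ++ [p, r, s] ++ suf ∧ r ≤ p ∧ r < s

/-- A word is irreducible when it is not reducible. -/
def WordIrreducible (w : List Bool) : Prop := ¬ WordReducible w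

/-- For j ∈ ℤ, zʲ means the j-th power of z (generator 2) if j ≥ 0
and the (−j)-th power of z⁻¹ (generator 3) if j < 0. -/
def zPow (𝕂 : Type*) [Field 𝕂] (j : ℤ) : FreeAlgebra 𝕂 (Fin 4) :=
  if 0 ≤ j then ι 𝕂 (2 : Fin 4) ^ j.toNat else ι 𝕂 (3 : Fin 4) ^ (-j).toNat

/-! ### Twisted commutators -/

section Generic

variable {𝕂 A : Type*} [Field 𝕂] [Ring A] [Algebra 𝕂 A]

/-- The `c`-twisted commutator `u a - c a u`, an operator in the argument `a`. -/
def twComm (u : A) (c : 𝕂) (a : A) : A := u * a - c • (a * u)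

/-- The composite of the twisted commutators with parameters `c 0, …, c (n - 1)`, where the
parameter `c 0` is applied first. -/
def twIter (u : A) (c : ℕ → 𝕂) : ℕ → A → A
  | 0, a => a
  | n + 1, a => twComm u (c n) (twIter u c n a)

theorem twIter_succ' (u : A) (c : ℕ → 𝕂) (n : ℕ) (a : A) :
    twIter u c (n + 1) a = twIter u (fun k => c (k + 1)) n (twComm u (c 0) a) := by
  induction n with
  | zero => rfl
  | succ n ih => rw [twIter, ih]; rfl

/-- The twisted Leibniz rule. -/
theorem twComm_mul (u : A) (c c' : 𝕂) (a b : A) :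
    twComm u (c * c') (a * b) = twComm u c a * b + c • (a * twComm u c' b) := by
  simp only [twComm, sub_mul, mul_sub, smul_sub, mul_smul, mul_smul_comm, smul_mul_assoc,
    mul_assoc]
  abel

/-- If `c k * c' l` depends only on `k + l`, then iterating the Leibniz rule keeps the products
homogeneous: the `m`-fold iterate on `a * b` only involves the `k`-th iterate on `a` and the
`l`-th one on `b` with `k + l = m`. -/
theorem twIter_mul_mem (u : A) (c c' c'' : ℕ → 𝕂) (h : ∀ k l, c'' (k + l) = c k * c' l)
    (a b : A) (m : ℕ) :
    twIter u c'' m (a * b) ∈ Submodule.span 𝕂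
      {t : A | ∃ k l, k + l = m ∧ t = twIter u c k a * twIter u c' l b} := by
  induction m with
  | zero => exact Submodule.subset_span ⟨0, 0, rfl, rfl⟩
  | succ m ih =>
    rw [twIter]
    refine Submodule.span_induction
      (p := fun t _ => twComm u (c'' m) t ∈ Submodule.span 𝕂
        {t : A | ∃ k l, k + l = m + 1 ∧ t = twIter u c k a * twIter u c' l b})
      ?_ ?_ ?_ ?_ ih
    · rintro _ ⟨k, l, rfl, rfl⟩
      rw [h, twComm_mul]
      refine Submodule.add_mem _ (Submodule.subset_span ⟨k + 1, l, by omega, rfl⟩)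
        (Submodule.smul_mem _ _ (Submodule.subset_span ⟨k, l + 1, by omega, rfl⟩))
    · simp [twComm]
    · intro s t _ _ hs ht
      have : twComm u (c'' m) (s + t) = twComm u (c'' m) s + twComm u (c'' m) t := by
        simp only [twComm, mul_add, add_mul, smul_add]; abel
      rw [this]; exact Submodule.add_mem _ hs ht
    · intro r t _ ht
      have : twComm u (c'' m) (r • t) = r • twComm u (c'' m) t := by
        simp only [twComm, mul_smul_comm, smul_mul_assoc, smul_sub, smul_comm r]
      rw [this]; exact Submodule.smul_mem _ _ ht

/-! ### Homogeneous polynomials in left and right multiplication -/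

/-- The `m`-homogenization of `f`, evaluated at left and right multiplication by `u` and
applied to `v`. -/
def homEval (u : A) (m : ℕ) (f : Polynomial 𝕂) (v : A) : A :=
  ∑ r ∈ Finset.range (m + 1), f.coeff r • (u ^ r * v * u ^ (m - r))

open Polynomial in
theorem homEval_X_sub_C_mul (u : A) (m : ℕ) (c : 𝕂) (g : Polynomial 𝕂) (hg : g.natDegree ≤ m)
    (v : A) : homEval u (m + 1) ((X - C c) * g) v = homEval u m g (twComm u c v) := by
  have h1 : ∀ r, ((X - C c) * g).coeff (r + 1) = g.coeff r - c * g.coeff (r + 1) := by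
    intro r; simp [sub_mul, coeff_X_mul]
  have h0 : ((X - C c) * g).coeff 0 = - (c * g.coeff 0) := by
    simp [sub_mul]
  have htop : g.coeff (m + 1) = 0 := coeff_eq_zero_of_natDegree_lt (by omega)
  have key : ∑ r ∈ Finset.range (m + 1 + 1), (c * g.coeff r) • (u ^ r * v * u ^ (m + 1 - r))
      = ∑ r ∈ Finset.range (m + 1), (c * g.coeff r) • (u ^ r * v * u ^ (m + 1 - r)) := by
    rw [Finset.sum_range_succ, htop]; simp
  rw [Finset.sum_range_succ'] at key
  unfold homEval
  rw [Finset.sum_range_succ', h0]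
  simp only [h1, sub_smul, neg_smul, Finset.sum_sub_distrib]
  rw [sub_add, sub_neg_eq_add, key, ← Finset.sum_sub_distrib]
  refine Finset.sum_congr rfl fun r hr => ?_
  have hr' : r ≤ m := by simpa [Nat.lt_succ_iff] using hr
  have e1 : m + 1 - (r + 1) = m - r := by omega
  have e2 : m + 1 - r = (m - r) + 1 := by omega
  rw [e1, e2, pow_succ u r, pow_succ' u (m - r), twComm]
  simp only [mul_sub, sub_mul, smul_sub, mul_smul_comm, smul_mul_assoc, mul_assoc, smul_smul,
    mul_comm c]

/-! ### Filtered algebras and higher order relations -/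

/-- The degree bookkeeping satisfied by the submodules `K n` of elements of degree less than `n`
in a filtered algebra. -/
structure IsFilt (K : ℕ → Submodule 𝕂 A) : Prop where
  mono : ∀ n, K n ≤ K (n + 1)
  one : (1 : A) ∈ K 1
  mul_left : ∀ m n a b, a ∈ K m → b ∈ K (n + 1) → a * b ∈ K (m + n)
  mul_right : ∀ m n a b, a ∈ K (m + 1) → b ∈ K n → a * b ∈ K (m + n)

namespace IsFilt

variable {K : ℕ → Submodule 𝕂 A}

theorem pow_mem (hK : IsFilt K) {u : A} (hu : u ∈ K 2) (r : ℕ) : u ^ r ∈ K (r + 1) := by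
  induction r with
  | zero => simpa using hK.one
  | succ r ih => rw [pow_succ]; exact hK.mul_left (r + 1) 1 _ _ ih hu

theorem sandwich_mem (hK : IsFilt K) {u u' v : A} {p r s : ℕ} (hu : u ∈ K (r + 1))
    (hu' : u' ∈ K (s + 1)) (hv : v ∈ K p) : u * v * u' ∈ K (p + (r + s)) := by
  have h := hK.mul_left (r + p) s _ _ (hK.mul_right r p _ _ hu hv) hu'
  rwa [show p + (r + s) = r + p + s by omega]

theorem twComm_mem (hK : IsFilt K) {u : A} (hu : u ∈ K 2) {p : ℕ} {a : A} (ha : a ∈ K p) (c : 𝕂) :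
    twComm u c a ∈ K (p + 1) := by
  refine Submodule.sub_mem _ ?_ (Submodule.smul_mem _ _ (hK.mul_left p 1 _ _ ha hu))
  rw [add_comm]; exact hK.mul_right 1 p _ _ hu ha

theorem twIter_mem (hK : IsFilt K) {u : A} (hu : u ∈ K 2) (c : ℕ → 𝕂) {p : ℕ} {a : A} {k l : ℕ}
    (hkl : k ≤ l) (ha : twIter u c k a ∈ K (p + k)) : twIter u c l a ∈ K (p + l) := by
  induction l, hkl using Nat.le_induction with
  | base => exact ha
  | succ l _ ih => exact hK.twComm_mem hu ih _

/-- If the composite of the first `n` twisted commutators lowers the expected degree of `v`, so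
does every homogenized polynomial vanishing at the (distinct) parameters. -/
theorem homEval_mem (hK : IsFilt K) {u : A} (hu : u ∈ K 2) (n : ℕ) (c : ℕ → 𝕂)
    (hc : ∀ k < n, ∀ l < n, c k = c l → k = l) (p : ℕ) (v : A)
    (hv : twIter u c n v ∈ K (p + n)) (m : ℕ) (f : Polynomial 𝕂) (hf : f.natDegree ≤ m)
    (hr : ∀ k < n, f.eval (c k) = 0) : homEval u m f v ∈ K (p + m) := by
  induction n generalizing c p v m f with
  | zero =>
    refine Submodule.sum_mem _ fun r hr => Submodule.smul_mem _ _ ?_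
    have hr' : r ≤ m := by simpa [Nat.lt_succ_iff] using hr
    have h := hK.sandwich_mem (hK.pow_mem hu r) (hK.pow_mem hu (m - r)) hv
    rwa [show p + 0 + (r + (m - r)) = p + m by omega] at h
  | succ n ih =>
    obtain ⟨g, rfl⟩ := Polynomial.dvd_iff_isRoot.mpr (hr 0 (Nat.succ_pos n))
    by_cases hg : g = 0
    · simp [hg, homEval]
    have hX : (Polynomial.X - Polynomial.C (c 0)) ≠ 0 := Polynomial.X_sub_C_ne_zero _
    rw [Polynomial.natDegree_mul hX hg, Polynomial.natDegree_X_sub_C] at hf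
    obtain ⟨m, rfl⟩ : ∃ m', m = m' + 1 := ⟨m - 1, by omega⟩
    rw [homEval_X_sub_C_mul u m (c 0) g (by omega)]
    have h := ih (fun k => c (k + 1)) (fun k hk l hl h => by
        have := hc (k + 1) (by omega) (l + 1) (by omega) h; omega) (p + 1) (twComm u (c 0) v)
      (by rw [← twIter_succ']; convert hv using 2; omega) m g (by omega) (fun k hk => by
        have h1 := hr (k + 1) (by omega)
        rw [Polynomial.eval_mul] at h1
        refine (mul_eq_zero.mp h1).resolve_left ?_
        simp only [Polynomial.eval_sub, Polynomial.eval_X, Polynomial.eval_C]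
        intro h2
        have := hc (k + 1) (by omega) 0 (by omega) (sub_eq_zero.mp h2)
        omega)
    rwa [show p + 1 + m = p + (m + 1) by omega] at h

/-- The higher order `q`-Serre relation up to lower degree terms: the cubic relation for `v`
implies one of order `2 n + 1` for `v ^ n`. -/
theorem higher_serre (hK : IsFilt K) {q : 𝕂} (hq : q ≠ 0) {u v : A} (hu : u ∈ K 2) (hv : v ∈ K 2)
    (hs : twIter u (fun k => q ^ (2 * (1 - (k : ℤ)))) 3 v ∈ K 4) (n : ℕ) :
    twIter u (fun k => q ^ (2 * ((n : ℤ) - k))) (2 * n + 1) (v ^ n) ∈ K (n + (2 * n + 1)) := by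
  induction n with
  | zero => simp [twIter, twComm]
  | succ n ih =>
    rw [pow_succ]
    have h := twIter_mul_mem u (fun k => q ^ (2 * ((n : ℤ) - k)))
      (fun k => q ^ (2 * (1 - (k : ℤ)))) (fun k => q ^ (2 * (((n + 1 : ℕ) : ℤ) - k)))
      (fun k l => by
        rw [← zpow_add₀ hq]; congr 1; push_cast; ring) (v ^ n) v (2 * (n + 1) + 1)
    refine Submodule.span_le.mpr ?_ h
    rintro _ ⟨k, l, hkl, rfl⟩
    -- Each product has one factor of lowered degree, since `k + l = (2 n + 1) + 3 - 1`.
    rcases le_or_gt (2 * n + 1) k with hk | hk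
    · have h1 := hK.twIter_mem hu _ hk ih
      have h2 : twIter u (fun k => q ^ (2 * (1 - (k : ℤ)))) l v ∈ K (2 + l) :=
        hK.twIter_mem hu _ (Nat.zero_le l) hv
      have h3 := hK.mul_left (n + k) (1 + l) _ _ h1 (by convert h2 using 2; omega)
      rwa [show n + k + (1 + l) = n + 1 + (2 * (n + 1) + 1) by omega] at h3
    · have h1 : twIter u (fun k => q ^ (2 * ((n : ℤ) - k))) k (v ^ n) ∈ K (n + 1 + k) :=
        hK.twIter_mem hu _ (Nat.zero_le k) (hK.pow_mem hv n)
      have h2 : twIter u (fun k => q ^ (2 * (1 - (k : ℤ)))) l v ∈ K (1 + l) :=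
        hK.twIter_mem hu _ (by omega : 3 ≤ l) hs
      have h3 := hK.mul_right (n + k) (1 + l) _ _ (by convert h1 using 2; omega) h2
      rwa [show n + k + (1 + l) = n + 1 + (2 * (n + 1) + 1) by omega] at h3

end IsFilt

theorem zpow_inj_of_not_root {q : 𝕂} (hq : q ≠ 0) (hqru : ∀ n : ℕ, 0 < n → q ^ n ≠ 1) {a b : ℤ}
    (h : q ^ a = q ^ b) : a = b := by
  wlog hab : a ≤ b generalizing a b
  · exact (this h.symm (by omega)).symm
  by_contra hne
  apply hqru (b - a).toNat (by omega)
  rw [← zpow_natCast, Int.toNat_of_nonneg (by omega), zpow_sub₀ hq, h,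
    div_self (zpow_ne_zero _ hq)]

/-- Any monomial agrees on the nodes `q ^ (2 (j - k))`, `0 ≤ k ≤ 2 j`, with a combination of
prescribed monomials with `2 j + 1` distinct exponents: the matrix of node powers is, up to
scaling, also a Vandermonde matrix in the exponents. -/
theorem exists_interp {q : 𝕂} (hq : q ≠ 0) (hqru : ∀ n : ℕ, 0 < n → q ^ n ≠ 1) (j e : ℕ)
    (σ : Fin (2 * j + 1) → ℕ) (hσ : Function.Injective σ) :
    ∃ d : Fin (2 * j + 1) → 𝕂, ∀ k < 2 * j + 1,
      ∑ i, d i * (q ^ (2 * ((j : ℤ) - (k : ℕ)))) ^ σ i = (q ^ (2 * ((j : ℤ) - (k : ℕ)))) ^ e := by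
  let V := Matrix.vandermonde (fun i => q ^ (-2 * (σ i : ℤ)))
  have hV : IsUnit V := by
    rw [Matrix.isUnit_iff_isUnit_det, isUnit_iff_ne_zero, Matrix.det_vandermonde_ne_zero_iff]
    intro a b hab
    have := zpow_inj_of_not_root hq hqru hab
    exact hσ (by omega)
  obtain ⟨d, hd⟩ := Matrix.vecMul_surjective_iff_isUnit.mpr hV
    (fun k : Fin (2 * j + 1) => (q ^ (2 * ((j : ℤ) - ((k : ℕ) : ℤ)))) ^ e)
  refine ⟨fun i => d i * q ^ (-2 * (σ i : ℤ) * j), fun k hk => ?_⟩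
  have h := congrFun hd ⟨k, hk⟩
  simp only [Matrix.vecMul, dotProduct, V, Matrix.vandermonde_apply] at h
  rw [← h]
  refine Finset.sum_congr rfl fun i _ => ?_
  rw [mul_assoc]
  congr 1
  simp only [← zpow_natCast, ← zpow_mul]
  rw [← zpow_add₀ hq]
  congr 1
  ring

/-- The straightening rule: up to lower degree terms, `u ^ i v ^ j u ^ k` with `i ≥ j < k` is a
combination of the `u ^ r v ^ j u ^ s` with `r + s = i + k` and `r < j` or `s ≤ j`. -/
theorem IsFilt.straighten {K : ℕ → Submodule 𝕂 A} (hK : IsFilt K) {q : 𝕂} (hq : q ≠ 0)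
    (hqru : ∀ n : ℕ, 0 < n → q ^ n ≠ 1) {u v : A} (hu : u ∈ K 2) (hv : v ∈ K 2)
    (hs : twIter u (fun k => q ^ (2 * (1 - (k : ℤ)))) 3 v ∈ K 4) (i j k : ℕ)
    (hij : j ≤ i) (hjk : j < k) :
    ∃ (d : Fin (2 * j + 1) → 𝕂) (r s : Fin (2 * j + 1) → ℕ),
      (∀ t, r t + s t = i + k ∧ (r t < j ∨ s t ≤ j)) ∧
      u ^ i * v ^ j * u ^ k - ∑ t, d t • (u ^ r t * v ^ j * u ^ s t) ∈ K (i + j + k) := by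
  let σ : Fin (2 * j + 1) → ℕ := fun t => if t.1 < j then t.1 else t.1 + (i + k - 2 * j)
  have hσ : Function.Injective σ := by
    intro a b hab
    simp only [σ] at hab
    ext
    split_ifs at hab <;> omega
  have hσle : ∀ t, σ t ≤ i + k := by
    intro t; have := t.2; simp only [σ]; split_ifs <;> omega
  obtain ⟨d, hd⟩ := exists_interp hq hqru j i σ hσ
  refine ⟨d, σ, fun t => i + k - σ t, fun t => ⟨Nat.add_sub_cancel' (hσle t), ?_⟩, ?_⟩
  · have := t.2; simp only [σ]; split_ifs <;> omega
  let f : Polynomial 𝕂 := Polynomial.X ^ i - ∑ t, Polynomial.C (d t) * Polynomial.X ^ σ t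
  have hf : f.natDegree ≤ i + k := by
    refine (Polynomial.natDegree_sub_le _ _).trans (max_le ?_ ?_)
    · simp
    · refine Polynomial.natDegree_sum_le_of_forall_le _ _ fun t _ => ?_
      exact (Polynomial.natDegree_C_mul_X_pow_le _ _).trans (hσle t)
  have hX : ∀ e ≤ i + k, ∑ r ∈ Finset.range (i + k + 1), (Polynomial.X ^ e : Polynomial 𝕂).coeff r •
      (u ^ r * v ^ j * u ^ (i + k - r)) = u ^ e * v ^ j * u ^ (i + k - e) := by
    intro e he
    simp only [Polynomial.coeff_X_pow, ite_smul, one_smul, zero_smul]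
    rw [Finset.sum_ite_eq', if_pos (by simpa [Nat.lt_succ_iff] using he)]
  have hval : homEval u (i + k) f (v ^ j) =
      u ^ i * v ^ j * u ^ k - ∑ t, d t • (u ^ σ t * v ^ j * u ^ (i + k - σ t)) := by
    simp only [homEval, f, Polynomial.coeff_sub, Polynomial.finsetSum_coeff,
      Polynomial.coeff_C_mul, sub_smul, Finset.sum_sub_distrib, Finset.sum_smul]
    rw [hX i (by omega), Finset.sum_comm, Nat.add_sub_cancel_left]
    congr 1
    refine Finset.sum_congr rfl fun t _ => ?_
    rw [← hX _ (hσle t), Finset.smul_sum]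
    simp only [mul_smul]
  rw [← hval, show i + j + k = j + (i + k) by omega]
  refine hK.homEval_mem hu (2 * j + 1) _ ?_ j (v ^ j) (hK.higher_serre hq hu hv hs j) _ f hf ?_
  · intro a _ b _ hab
    have := zpow_inj_of_not_root hq hqru hab
    omega
  · intro a ha
    simp only [f, Polynomial.eval_sub, Polynomial.eval_pow, Polynomial.eval_X,
      Polynomial.eval_finsetSum, Polynomial.eval_mul, Polynomial.eval_C]
    rw [hd a ha, sub_self]

end Generic

/-! ### Block patterns of words -/

/-- The word with alternating blocks of the given lengths, the first block consisting of the
letter `b`. Lengths may be zero, so the list need not be the signature of the word. -/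
def blk : Bool → List ℕ → List Bool
  | _, [] => []
  | b, a :: l => List.replicate a b ++ blk (!b) l

theorem exists_blk_append (b : Bool) (pre : List ℕ) :
    ∃ b', ∀ suf, blk b (pre ++ suf) = blk b pre ++ blk b' suf := by
  induction pre generalizing b with
  | nil => exact ⟨b, fun suf => rfl⟩
  | cons a l ih =>
    obtain ⟨b', h⟩ := ih (!b)
    exact ⟨b', fun suf => by simp [blk, h]⟩

theorem length_blk (b : Bool) (l : List ℕ) : (blk b l).length = l.sum := by
  induction l generalizing b with
  | nil => rfl
  | cons a l ih => simp [blk, ih]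

theorem exists_eq_blk (w : List Bool) : ∃ l, w = blk true l := by
  induction w with
  | nil => exact ⟨[], rfl⟩
  | cons a w ih =>
    obtain ⟨l, rfl⟩ := ih
    cases a
    · exact ⟨0 :: 1 :: l, rfl⟩
    · exact ⟨1 :: 0 :: l, rfl⟩

theorem blk_zero_mid (b : Bool) (a c : ℕ) (suf : List ℕ) :
    blk b (a :: 0 :: c :: suf) = blk b ((a + c) :: suf) := by
  simp only [blk, List.replicate_zero, List.nil_append, Bool.not_not, List.replicate_add,
    List.append_assoc]

theorem sigAux_replicate (b : Bool) (n k : ℕ) (w : List Bool) :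
    sigAux b n (List.replicate k b ++ w) = sigAux b (n + k) w := by
  induction k generalizing n with
  | zero => rfl
  | succ k ih =>
    rw [List.replicate_succ, List.cons_append, sigAux, if_pos rfl, ih]
    congr 1; omega

theorem sigAux_blk (b : Bool) (n : ℕ) (l : List ℕ) (hl : 0 ∉ l) :
    sigAux b n (blk (!b) l) = n :: l := by
  induction l generalizing b n with
  | nil => rfl
  | cons a l ih =>
    obtain ⟨ha, hl'⟩ : 0 ≠ a ∧ 0 ∉ l := by simpa using hl
    obtain ⟨a, rfl⟩ : ∃ a', a = a' + 1 := ⟨a - 1, by omega⟩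
    rw [blk, List.replicate_succ, List.cons_append, sigAux, if_neg (by simp),
      sigAux_replicate, ih _ _ hl', add_comm]

theorem signature_blk (b : Bool) (l : List ℕ) (hl : 0 ∉ l) : signature (blk b l) = l := by
  cases l with
  | nil => rfl
  | cons a l =>
    obtain ⟨ha, hl'⟩ : 0 ≠ a ∧ 0 ∉ l := by simpa using hl
    obtain ⟨a, rfl⟩ : ∃ a', a = a' + 1 := ⟨a - 1, by omega⟩
    rw [blk, List.replicate_succ, List.cons_append, signature, sigAux_replicate,
      sigAux_blk _ _ _ hl', add_comm]

/-- The sum of the squares of the block lengths. -/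
def sqSum : List ℕ → ℕ
  | [] => 0
  | a :: l => a ^ 2 + sqSum l

/-- The sum of the block lengths weighted by their (zero-based) positions, plus the number of
blocks. -/
def moment : List ℕ → ℕ
  | [] => 0
  | _ :: l => moment l + l.sum + 1

theorem sqSum_append (l l' : List ℕ) : sqSum (l ++ l') = sqSum l + sqSum l' := by
  induction l with
  | nil => simp [sqSum]
  | cons a l ih => simp [sqSum, ih, add_assoc]

theorem moment_append (l l' : List ℕ) :
    moment (l ++ l') = moment l + moment l' + l.length * l'.sum := by
  induction l with
  | nil => simp [moment]
  | cons a l ih => simp [moment, ih]; ring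

theorem sqSum_le (l : List ℕ) : sqSum l ≤ l.sum ^ 2 := by
  induction l with
  | nil => simp [sqSum]
  | cons a l ih => simp only [sqSum, List.sum_cons]; nlinarith [Nat.zero_le (a * l.sum)]

/-- Straightening a block pattern either strictly increases the sum of squares, or interchanges
the outer lengths, the larger of them moving to the front. -/
theorem straighten_lt {p r s p' s' : ℕ} (hrp : r ≤ p) (hrs : r < s) (h : p' + s' = p + s)
    (h' : p' < r ∨ s' ≤ r) :
    p ^ 2 + s ^ 2 < p' ^ 2 + s' ^ 2 ∨ (p ^ 2 + s ^ 2 = p' ^ 2 + s' ^ 2 ∧ s' < s) := by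
  rcases h' with h' | h'
  · left
    obtain ⟨a, rfl⟩ : ∃ a, p = p' + (a + 1) := ⟨p - p' - 1, by omega⟩
    obtain ⟨b, rfl⟩ : ∃ b, s = p' + (b + 1) := ⟨s - p' - 1, by omega⟩
    obtain rfl : s' = p' + (a + 1) + (b + 1) := by omega
    nlinarith [Nat.zero_le (a * b)]
  · obtain ⟨a, rfl⟩ : ∃ a, s = s' + (a + 1) := ⟨s - s' - 1, by omega⟩
    obtain ⟨b, rfl⟩ : ∃ b, p = s' + b := ⟨p - s', by omega⟩
    obtain rfl : p' = s' + b + (a + 1) := by omega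
    rcases Nat.eq_zero_or_pos b with rfl | hb
    · right; constructor
      · ring
      · omega
    · left; nlinarith [Nat.zero_le (a * b)]

/-- Induction for words of a fixed length: a property of words holds everywhere if it holds for
irreducible words and passes from all straightenings of a block pattern to the pattern itself.
Straightening terminates because it increases the pair (`sqSum`, minus `moment`)
lexicographically; deleting a zero block does not decrease `sqSum`, and decreases `moment`. -/
theorem word_induction (n : ℕ) (P : List Bool → Prop)
    (hirr : ∀ w, w.length = n → WordIrreducible w → P w)
    (hred : ∀ b pre p r s suf, (blk b (pre ++ [p, r, s] ++ suf)).length = n → r ≤ p → r < s →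
      (∀ p' s', p' + s' = p + s → (p' < r ∨ s' ≤ r) → P (blk b (pre ++ [p', r, s'] ++ suf))) →
      P (blk b (pre ++ [p, r, s] ++ suf)))
    (w : List Bool) (hw : w.length = n) : P w := by
  suffices H : ∀ M N : ℕ, ∀ l : List ℕ, l.sum = n → n ^ 2 - sqSum l = M → moment l = N →
      ∀ b, P (blk b l) by
    obtain ⟨l, rfl⟩ := exists_eq_blk w
    exact H _ _ l (by rw [← hw, length_blk]) rfl rfl _
  intro M
  induction M using Nat.strong_induction_on with
  | _ M ihM =>
  intro N
  induction N using Nat.strong_induction_on with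
  | _ N ihN =>
  intro l hl hM hN b
  have step : ∀ l' : List ℕ, l'.sum = n →
      (sqSum l < sqSum l' ∨ (sqSum l ≤ sqSum l' ∧ moment l' < moment l)) →
      ∀ b, P (blk b l') := by
    intro l' hl' h b'
    have h1 := sqSum_le l'
    rw [hl'] at h1
    by_cases hlt : sqSum l < sqSum l'
    · exact ihM (n ^ 2 - sqSum l') (by omega) _ l' hl' rfl rfl b'
    · exact ihN (moment l') (by omega) l' hl' (by omega) rfl b'
  -- A zero block is deleted, merging its neighbours when it has two.
  by_cases h0 : 0 ∈ l
  · obtain ⟨pre, suf, rfl⟩ := List.append_of_mem h0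
    rcases List.eq_nil_or_concat pre with rfl | ⟨pre, p, rfl⟩
    · have := step suf (by simpa using hl) (Or.inr ⟨by simp [sqSum], by simp only [moment, List.nil_append]; omega⟩) (!b)
      simpa [blk] using this
    · cases suf with
      | nil =>
        have := step (pre ++ [p]) (by simpa using hl)
          (Or.inr ⟨by simp [sqSum, sqSum_append], by simp [moment, moment_append]⟩) b
        obtain ⟨b', hb'⟩ := exists_blk_append b (pre ++ [p])
        rw [List.concat_eq_append, hb']
        rw [← List.append_nil (pre ++ [p]), hb'] at this
        simpa [blk] using this
      | cons s suf =>
        have := step (pre ++ (p + s) :: suf)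
          (by rw [← hl]; simp; omega)
          (Or.inr ⟨by simp [sqSum, sqSum_append]; nlinarith [Nat.zero_le (p * s)],
            by
              have e : p + (s + suf.sum) = p + s + suf.sum := by ring
              simp only [List.concat_eq_append, List.append_assoc, List.singleton_append, moment,
                moment_append, List.sum_cons, zero_add, e]
              omega⟩) b
        obtain ⟨b', hb'⟩ := exists_blk_append b pre
        rw [List.concat_eq_append, List.append_assoc, List.singleton_append, hb', blk_zero_mid]
        rwa [hb'] at this
  · by_cases hr : WordReducible (blk b l)
    · obtain ⟨pre, suf, p, r, s, h, hrp, hrs⟩ := hr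
      rw [signature_blk b l h0] at h
      subst h
      refine hred b pre p r s suf (by rw [length_blk, hl]) hrp hrs fun p' s' h h' => ?_
      refine step _ (by rw [← hl]; simp; omega) ?_ b
      have h2 := straighten_lt hrp hrs h h'
      simp only [sqSum_append, moment_append, sqSum, moment, List.length_append, List.length_cons,
        List.length_nil, List.sum_cons, List.sum_nil]
      rw [show p' + (r + (s' + 0)) = p + (r + (s + 0)) by omega]
      omega
    · exact hirr _ (by rw [length_blk, hl]) hr

/-! ### The degree filtration of the algebra -/

section Aq

variable {𝕂 : Type*} [Field 𝕂] (q α : 𝕂)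

/-- The image in `A_q(α)` of the letter coded by `b`. -/
def gen (b : Bool) : RingQuot (AqRel 𝕂 q α) :=
  RingQuot.mkAlgHom 𝕂 (AqRel 𝕂 q α) (if b then ι 𝕂 (0 : Fin 4) else ι 𝕂 (1 : Fin 4))

/-- The image in `A_q(α)` of a word. -/
def wordA (w : List Bool) : RingQuot (AqRel 𝕂 q α) := (w.map (gen q α)).prod

/-- The generator `z` as a unit of `A_q(α)`. -/
def zUnit : (RingQuot (AqRel 𝕂 q α))ˣ where
  val := RingQuot.mkAlgHom 𝕂 (AqRel 𝕂 q α) (ι 𝕂 (2 : Fin 4))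
  inv := RingQuot.mkAlgHom 𝕂 (AqRel 𝕂 q α) (ι 𝕂 (3 : Fin 4))
  val_inv := by
    rw [← map_mul, ← map_one (RingQuot.mkAlgHom 𝕂 (AqRel 𝕂 q α))]
    exact RingQuot.mkAlgHom_rel 𝕂 AqRel.zzi
  inv_val := by
    rw [← map_mul, ← map_one (RingQuot.mkAlgHom 𝕂 (AqRel 𝕂 q α))]
    exact RingQuot.mkAlgHom_rel 𝕂 AqRel.ziz

/-- The image of `z ^ j` in `A_q(α)`. -/
def zA (j : ℤ) : RingQuot (AqRel 𝕂 q α) := ((zUnit q α ^ j : (RingQuot (AqRel 𝕂 q α))ˣ))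

theorem zA_add (i j : ℤ) : zA q α (i + j) = zA q α i * zA q α j := by
  simp [zA, zpow_add]

theorem zA_zero : zA q α 0 = 1 := by simp [zA]

theorem mk_zPow (j : ℤ) : RingQuot.mkAlgHom 𝕂 (AqRel 𝕂 q α) (zPow 𝕂 j) = zA q α j := by
  unfold zPow zA
  split_ifs with h
  · obtain ⟨n, rfl⟩ := Int.eq_ofNat_of_zero_le h
    simp [zUnit]
  · obtain ⟨n, hn⟩ := Int.eq_ofNat_of_zero_le (show 0 ≤ -j by omega)
    obtain rfl : j = -(n : ℤ) := by omega
    simp only [neg_neg, Int.toNat_natCast, map_pow, zpow_neg, zpow_natCast, ← inv_pow,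
      Units.val_pow_eq_pow_val]
    rfl

theorem mk_wordProd (w : List Bool) :
    RingQuot.mkAlgHom 𝕂 (AqRel 𝕂 q α) (wordProd 𝕂 w) = wordA q α w := by
  rw [wordProd, map_list_prod, List.map_map]
  rfl

theorem wordA_append (w w' : List Bool) :
    wordA q α (w ++ w') = wordA q α w * wordA q α w' := by
  simp [wordA]

theorem wordA_replicate (n : ℕ) (b : Bool) : wordA q α (List.replicate n b) = gen q α b ^ n := by
  simp [wordA]

variable {q} in
theorem z_mul_gen (hq : q ≠ 0) (b : Bool) :
    ∃ c : 𝕂, c ≠ 0 ∧ zA q α 1 * gen q α b = c • (gen q α b * zA q α 1) := by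
  cases b
  · refine ⟨q⁻¹ ^ 2, by simp [hq], ?_⟩
    have := RingQuot.mkAlgHom_rel 𝕂 (AqRel.zy (q := q) (α := α))
    simpa [zA, gen, zUnit] using this
  · refine ⟨q ^ 2, by simp [hq], ?_⟩
    have := RingQuot.mkAlgHom_rel 𝕂 (AqRel.zx (q := q) (α := α))
    simpa [zA, gen, zUnit] using this

variable {q} in
theorem zA_mul_gen (hq : q ≠ 0) (b : Bool) (j : ℤ) :
    ∃ c : 𝕂, zA q α j * gen q α b = c • (gen q α b * zA q α j) := by
  obtain ⟨c, hc, h⟩ := z_mul_gen α hq b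
  have h' : zA q α (-1) * gen q α b = c⁻¹ • (gen q α b * zA q α (-1)) := by
    have e : zA q α 1 * zA q α (-1) = 1 := by rw [← zA_add, ← zA_zero]; rfl
    have e' : zA q α (-1) * zA q α 1 = 1 := by rw [← zA_add, ← zA_zero]; rfl
    calc zA q α (-1) * gen q α b
        = c⁻¹ • (zA q α (-1) * (c • (gen q α b * zA q α 1)) * zA q α (-1)) := by
          rw [mul_smul_comm, smul_mul_assoc, smul_smul, inv_mul_cancel₀ hc, one_smul, mul_assoc,
            mul_assoc, e, mul_one]
      _ = c⁻¹ • (gen q α b * zA q α (-1)) := by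
          rw [← h, ← mul_assoc (zA q α (-1)), e', one_mul]
  induction j using Int.induction_on with
  | zero => exact ⟨1, by simp [zA_zero]⟩
  | succ i ih =>
    obtain ⟨d, hd⟩ := ih
    refine ⟨c * d, ?_⟩
    rw [zA_add, mul_assoc, h, mul_smul_comm, ← mul_assoc, hd, smul_mul_assoc, smul_smul, mul_assoc]
  | pred i ih =>
    obtain ⟨d, hd⟩ := ih
    refine ⟨c⁻¹ * d, ?_⟩
    rw [sub_eq_add_neg, zA_add, mul_assoc, h', mul_smul_comm, ← mul_assoc, hd, smul_mul_assoc,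
      smul_smul, mul_assoc]

variable {q} in
theorem zA_mul_wordA (hq : q ≠ 0) (w : List Bool) (j : ℤ) :
    ∃ c : 𝕂, zA q α j * wordA q α w = c • (wordA q α w * zA q α j) := by
  induction w with
  | nil => exact ⟨1, by simp [wordA]⟩
  | cons b w ih =>
    obtain ⟨c, hc⟩ := ih
    obtain ⟨d, hd⟩ := zA_mul_gen α hq b j
    refine ⟨d * c, ?_⟩
    have e : wordA q α (b :: w) = gen q α b * wordA q α w := by simp [wordA]
    rw [e, ← mul_assoc, hd, smul_mul_assoc, mul_assoc, hc, mul_smul_comm, smul_smul, mul_assoc]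

/-- The span of the `w z ^ j` where the word `w` has length less than `n`. -/
def lowDeg (n : ℕ) : Submodule 𝕂 (RingQuot (AqRel 𝕂 q α)) :=
  Submodule.span 𝕂 {a | ∃ (w : List Bool) (j : ℤ), w.length < n ∧ a = wordA q α w * zA q α j}

theorem lowDeg_mono {m n : ℕ} (h : m ≤ n) : lowDeg q α m ≤ lowDeg q α n := by
  refine Submodule.span_mono ?_
  rintro _ ⟨w, j, hw, rfl⟩
  exact ⟨w, j, by omega, rfl⟩

theorem mem_lowDeg (w : List Bool) (j : ℤ) {n : ℕ} (hw : w.length < n) :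
    wordA q α w * zA q α j ∈ lowDeg q α n := Submodule.subset_span ⟨w, j, hw, rfl⟩

variable {q} in
theorem lowDeg_mul (hq : q ≠ 0) {m n k : ℕ} (h : m + n ≤ k + 1)
    {a b : RingQuot (AqRel 𝕂 q α)} (ha : a ∈ lowDeg q α m) (hb : b ∈ lowDeg q α n) :
    a * b ∈ lowDeg q α k := by
  have h1 := Submodule.mul_mem_mul ha hb
  rw [lowDeg, lowDeg, Submodule.span_mul_span] at h1
  refine Submodule.span_le.mpr ?_ h1
  rintro _ ⟨_, ⟨w, j, hw, rfl⟩, _, ⟨w', j', hw', rfl⟩, rfl⟩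
  obtain ⟨c, hc⟩ := zA_mul_wordA α hq w' j
  have e : wordA q α w * zA q α j * (wordA q α w' * zA q α j') =
      c • (wordA q α (w ++ w') * zA q α (j + j')) := by
    rw [mul_assoc, ← mul_assoc (zA q α j), hc, smul_mul_assoc, mul_smul_comm, wordA_append, zA_add]
    simp only [mul_assoc]
  simp only [SetLike.mem_coe]
  rw [e]
  exact Submodule.smul_mem _ _ (mem_lowDeg q α _ _ (by simp; omega))

variable {q} in
theorem isFilt_lowDeg (hq : q ≠ 0) : IsFilt (lowDeg q α) where
  mono n := lowDeg_mono q α (by omega)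
  one := by
    have := mem_lowDeg q α [] 0 (n := 1) (by simp)
    simpa [wordA, zA_zero] using this
  mul_left m n a b ha hb := lowDeg_mul α hq (by omega) ha hb
  mul_right m n a b ha hb := lowDeg_mul α hq (by omega) ha hb

theorem gen_pow_mem (b : Bool) (n : ℕ) : gen q α b ^ n ∈ lowDeg q α (n + 1) := by
  have := mem_lowDeg q α (List.replicate n b) 0 (n := n + 1) (by simp)
  simpa [wordA_replicate, zA_zero] using this

theorem zA_mem (j : ℤ) : zA q α j ∈ lowDeg q α 1 := by
  have := mem_lowDeg q α [] j (n := 1) (by simp)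
  simpa [wordA] using this

variable {q} in
/-- The cubic relations of `A_q(α)` say that three twisted commutators with one letter send the
other letter to an element of lower degree. -/
theorem cubic (hq : q ≠ 0) (hqru : ∀ n : ℕ, 0 < n → q ^ n ≠ 1) (b : Bool) :
    twIter (gen q α b) (fun k => q ^ (2 * (1 - (k : ℤ)))) 3 (gen q α (!b)) ∈ lowDeg q α 4 := by
  have hq2 : q - q⁻¹ ≠ 0 := by
    intro h
    apply hqru 2 (by norm_num)
    rw [pow_two]
    nth_rewrite 2 [sub_eq_zero.mp h]
    exact mul_inv_cancel₀ hq
  have h3 : (q ^ 3 - q⁻¹ ^ 3) / (q - q⁻¹) = q ^ 2 + 1 + q⁻¹ ^ 2 := by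
    rw [div_eq_iff hq2]
    field_simp
    ring
  have key : ∀ u v : RingQuot (AqRel 𝕂 q α),
      twIter u (fun k => q ^ (2 * (1 - (k : ℤ)))) 3 v =
        u ^ 3 * v - (q ^ 2 + 1 + q⁻¹ ^ 2) • (u ^ 2 * v * u)
          + (q ^ 2 + 1 + q⁻¹ ^ 2) • (u * v * u ^ 2) - v * u ^ 3 := by
    intro u v
    have e0 : q ^ (2 * (1 - ((0 : ℕ) : ℤ))) = q ^ 2 := by norm_num
    have e1 : q ^ (2 * (1 - ((1 : ℕ) : ℤ))) = 1 := by norm_num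
    have e2 : q ^ (2 * (1 - ((2 : ℕ) : ℤ))) = q⁻¹ ^ 2 := by norm_num
    have e3 : q ^ 2 * q⁻¹ ^ 2 = 1 := by field_simp
    simp only [twIter, twComm, e0, e1, e2]
    generalize q ^ 2 = s at *
    generalize q⁻¹ ^ 2 = t at *
    simp only [mul_sub, sub_mul, smul_sub, mul_smul_comm, smul_mul_assoc, smul_smul, one_smul,
      pow_succ, pow_zero, one_mul, mul_assoc, add_smul, mul_comm t s, e3]
    abel
  have hz : zA q α (-2) = RingQuot.mkAlgHom 𝕂 (AqRel 𝕂 q α) (ι 𝕂 (3 : Fin 4)) ^ 2 := by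
    rw [← mk_zPow]; simp [zPow]
  have hg : ∀ b, gen q α b ^ 2 ∈ lowDeg q α 3 := fun b => gen_pow_mem q α b 2
  cases b
  · have h := RingQuot.mkAlgHom_rel 𝕂 (AqRel.serre2 (q := q) (α := α))
    simp only [map_add, map_sub, map_mul, map_smul, map_pow, h3, ← hz] at h
    have e : twIter (gen q α false) (fun k => q ^ (2 * (1 - (k : ℤ)))) 3 (gen q α true) =
        - (α • (zA q α (-2) * gen q α false ^ 2)) := by
      have h' : α • (zA q α (-2) * gen q α false ^ 2) = _ := h.symm
      rw [h', key]
      simp only [gen]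
      simp only [Bool.false_eq_true, if_true, if_false]
      abel
    rw [Bool.not_false, e]
    exact Submodule.neg_mem _ (Submodule.smul_mem _ _
      (lowDeg_mul α hq (by norm_num) (zA_mem q α _) (hg _)))
  · have h := RingQuot.mkAlgHom_rel 𝕂 (AqRel.serre1 (q := q) (α := α))
    simp only [map_add, map_sub, map_mul, map_smul, map_pow, h3, ← hz] at h
    have e : twIter (gen q α true) (fun k => q ^ (2 * (1 - (k : ℤ)))) 3 (gen q α false) =
        α • (gen q α true ^ 2 * zA q α (-2)) := by
      rw [key]; exact h
    rw [Bool.not_true, e]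
    exact Submodule.smul_mem _ _ (lowDeg_mul α hq (by norm_num) (hg _) (zA_mem q α _))

variable {q} in
theorem mem_lowDeg_of_all (hq : q ≠ 0) (a : RingQuot (AqRel 𝕂 q α)) : ∃ n, a ∈ lowDeg q α n := by
  obtain ⟨f, rfl⟩ := RingQuot.mkAlgHom_surjective 𝕂 (AqRel 𝕂 q α) a
  induction f using FreeAlgebra.induction with
  | grade0 r =>
    refine ⟨1, ?_⟩
    rw [AlgHom.commutes, Algebra.algebraMap_eq_smul_one]
    exact Submodule.smul_mem _ _ (isFilt_lowDeg α hq).one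
  | grade1 i =>
    have hx : ∀ b, gen q α b ∈ lowDeg q α 2 := fun b => by simpa using gen_pow_mem q α b 1
    have hz : RingQuot.mkAlgHom 𝕂 (AqRel 𝕂 q α) (ι 𝕂 (2 : Fin 4)) ∈ lowDeg q α 2 := by
      have := lowDeg_mono q α (show 1 ≤ 2 by norm_num) (zA_mem q α 1)
      rw [← mk_zPow] at this
      simpa [zPow] using this
    have hz' : RingQuot.mkAlgHom 𝕂 (AqRel 𝕂 q α) (ι 𝕂 (3 : Fin 4)) ∈ lowDeg q α 2 := by
      have := lowDeg_mono q α (show 1 ≤ 2 by norm_num) (zA_mem q α (-1))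
      rw [← mk_zPow] at this
      simpa [zPow] using this
    refine ⟨2, ?_⟩
    fin_cases i
    · exact hx true
    · exact hx false
    · exact hz
    · exact hz'
  | mul a b ha hb =>
    obtain ⟨m, hm⟩ := ha
    obtain ⟨n, hn⟩ := hb
    exact ⟨m + n, by rw [map_mul]; exact lowDeg_mul α hq (by omega) hm hn⟩
  | add a b ha hb =>
    obtain ⟨m, hm⟩ := ha
    obtain ⟨n, hn⟩ := hb
    refine ⟨m + n, ?_⟩
    rw [map_add]
    exact Submodule.add_mem _ (lowDeg_mono q α (by omega) hm) (lowDeg_mono q α (by omega) hn)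

variable {q} in
/-- Straightening a block pattern inside a word, up to lower degree terms. -/
theorem straighten_word (hq : q ≠ 0) (hqru : ∀ n : ℕ, 0 < n → q ^ n ≠ 1) (b : Bool)
    (pre : List ℕ) (p r s : ℕ) (suf : List ℕ) (hrp : r ≤ p) (hrs : r < s) :
    ∃ (d : Fin (2 * r + 1) → 𝕂) (p' s' : Fin (2 * r + 1) → ℕ),
      (∀ t, p' t + s' t = p + s ∧ (p' t < r ∨ s' t ≤ r)) ∧
      wordA q α (blk b (pre ++ [p, r, s] ++ suf)) -
        ∑ t, d t • wordA q α (blk b (pre ++ [p' t, r, s' t] ++ suf)) ∈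
        lowDeg q α (blk b (pre ++ [p, r, s] ++ suf)).length := by
  obtain ⟨b', hb'⟩ := exists_blk_append b pre
  have hx : ∀ b, gen q α b ∈ lowDeg q α 2 := fun b => by simpa using gen_pow_mem q α b 1
  obtain ⟨d, p', s', h1, h2⟩ := (isFilt_lowDeg α hq).straighten hq hqru (hx b') (hx (!b'))
    (cubic α hq hqru b') p r s hrp hrs
  refine ⟨d, p', s', h1, ?_⟩
  have e : ∀ p s, wordA q α (blk b (pre ++ [p, r, s] ++ suf)) =
      wordA q α (blk b pre) * (gen q α b' ^ p * gen q α (!b') ^ r * gen q α b' ^ s) *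
        wordA q α (blk (!b') suf) := by
    intro p s
    rw [List.append_assoc, hb']
    simp [blk, wordA_append, wordA_replicate, mul_assoc]
  have hw : ∀ w, wordA q α w ∈ lowDeg q α (w.length + 1) := fun w => by
    simpa [zA_zero] using mem_lowDeg q α w 0 (Nat.lt_succ_self w.length)
  have h3 := (isFilt_lowDeg α hq).sandwich_mem (hw (blk b pre)) (hw (blk (!b') suf)) h2
  rw [mul_sub, sub_mul, Finset.mul_sum, Finset.sum_mul] at h3
  simp only [mul_smul_comm, smul_mul_assoc, ← e] at h3
  convert h3 using 2
  simp only [length_blk, List.sum_append, List.sum_cons, List.sum_nil]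
  omega

end Aq

/-! ### The spanning theorem -/

theorem stmt_16 {𝕂 : Type*} [Field 𝕂] [IsAlgClosed 𝕂]
    {q : 𝕂} (hq0 : q ≠ 0) (hqru : ∀ n : ℕ, 0 < n → q ^ n ≠ 1) (α : 𝕂) :
    Submodule.span 𝕂 {a : RingQuot (AqRel 𝕂 q α) |
      ∃ (w : List Bool) (j : ℤ), WordIrreducible w ∧
        a = RingQuot.mkAlgHom 𝕂 (AqRel 𝕂 q α) (wordProd 𝕂 w * zPow 𝕂 j)} = ⊤ := by
  set T := Submodule.span 𝕂 {a : RingQuot (AqRel 𝕂 q α) |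
    ∃ (w : List Bool) (j : ℤ), WordIrreducible w ∧
      a = RingQuot.mkAlgHom 𝕂 (AqRel 𝕂 q α) (wordProd 𝕂 w * zPow 𝕂 j)} with hT
  suffices H : ∀ n, ∀ w : List Bool, w.length = n → ∀ j : ℤ, wordA q α w * zA q α j ∈ T by
    rw [eq_top_iff]
    intro a _
    obtain ⟨n, hn⟩ := mem_lowDeg_of_all α hq0 a
    refine Submodule.span_le.mpr ?_ hn
    rintro _ ⟨w, j, -, rfl⟩
    exact H _ w rfl j
  intro n
  induction n using Nat.strong_induction_on with
  | _ n ih =>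
  intro w hw
  refine word_induction n (fun w => ∀ j : ℤ, wordA q α w * zA q α j ∈ T) ?_ ?_ w hw
  · intro w _ hirr j
    exact Submodule.subset_span ⟨w, j, hirr, by rw [map_mul, mk_wordProd, mk_zPow]⟩
  · intro b pre p r s suf hlen hrp hrs hP j
    obtain ⟨d, p', s', h1, h2⟩ := straighten_word α hq0 hqru b pre p r s suf hrp hrs
    rw [hlen] at h2
    have h3 := lowDeg_mul α hq0 (le_refl (n + 1)) h2 (zA_mem q α j)
    have hle : lowDeg q α n ≤ T := by
      refine Submodule.span_le.mpr ?_
      rintro _ ⟨w', j', hw', rfl⟩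
      exact ih _ hw' w' rfl j'
    have h4 := hle h3
    rw [sub_mul, Finset.sum_mul] at h4
    refine (Submodule.sub_mem_iff_left T ?_).mp h4
    refine Submodule.sum_mem _ fun t _ => ?_
    rw [smul_mul_assoc]
    exact Submodule.smul_mem _ _ (hP _ _ (h1 t).1 (h1 t).2 j)
end
end

section
/- Let W be a subspace of V that is invariant under A and under Ã*, is nonzero, and is irreducible as an (A, Ã*)-module (i.e., W contains no subspace other than 0 and W that is invariant under both A and Ã*). Then V_d ⊆ W. -/
/-!
On the split component `W_i` both `A` and `Ã*` act as `q^(d-2i)` up to a term in `W_{i+1}`,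
respectively `W_{i-1}`, while `B` acts as `q^(2i-d)`. This gives the two `q`-Weyl relations
`q²AB - BA = (q² - 1)I` (through `qWeyl_of_apply_sub`) and `q²BÃ* - Ã*B = (q² - 1)I`.

They let `B` be moved to the left past `A` and `Ã*`. Hence, for a nonzero subspace `W` invariant
under `A` and `Ã*`, the sum of all `B^k W` is invariant under `A`, `Ã*` and `B`, so also under
`A* = cÃ* + B`; by irreducibility of the tridiagonal pair it is all of `V`
(`invariant_iSup_map_pow`).

The first relation also shows that `B` sends an `A`-eigenvector `v` for `θ_i` to `θ_i⁻¹ v` plus an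
eigenvector for `θ_{i-1}`. Therefore `B - q^(-d)` maps `V` into `U = range (A - q^d)`, the sum of
the `V_i` with `i < d`. So `B^k W ⊆ W + U` for all `k`, and `V = W + U`. Applying the polynomial
`∏_{j<d} (A - θ_j)`, which kills `U`, preserves `W` and acts on `V_d` as a nonzero scalar, yields
`V_d ⊆ W`.
-/

/-! ### Powers of `q` -/

/-- Integer powers of an element that is nonzero and not a root of unity are distinct. -/
lemma zpow_inj_of_not_root_s17 {K : Type*} [Field K] {q : K} (hq0 : q ≠ 0)
    (hqru : ∀ n : ℕ, 0 < n → q ^ n ≠ 1) {m n : ℤ} (h : q ^ m = q ^ n) : m = n := by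
  by_contra hne
  have h1 : q ^ (m - n) = 1 := by
    rw [zpow_sub₀ hq0, h, div_self (zpow_ne_zero _ hq0)]
  apply hqru (m - n).natAbs (by omega)
  rcases Int.natAbs_eq (m - n) with h2 | h2
  · rw [h2, zpow_natCast] at h1
    exact h1
  · rw [h2, zpow_neg, zpow_natCast, inv_eq_one] at h1
    exact h1

/-! ### Flags of eigenspaces -/

section Flag

variable {K V : Type*} [Field K] [AddCommGroup V] [Module K V]

lemma le_flag {Y : ℤ → Submodule K V} {d : ℤ} (hY : ∀ i : ℤ, i < 0 ∨ d < i → Y i = ⊥)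
    {j n : ℤ} (h : j ≤ n) : Y j ≤ ⨆ k ∈ Finset.Icc (0:ℤ) n, Y k := by
  by_cases h0 : j < 0
  · rw [hY j (Or.inl h0)]
    exact bot_le
  · exact le_iSup₂_of_le (f := fun k (_ : k ∈ Finset.Icc (0:ℤ) n) => Y k) j
      (Finset.mem_Icc.2 ⟨by omega, h⟩) le_rfl

lemma flag_mono (Y : ℤ → Submodule K V) {m n : ℤ} (h : m ≤ n) :
    (⨆ k ∈ Finset.Icc (0:ℤ) m, Y k) ≤ ⨆ k ∈ Finset.Icc (0:ℤ) n, Y k :=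
  biSup_mono fun _ hj => Finset.Icc_subset_Icc_right h hj

/-- A map that is tridiagonal with respect to `Y` raises the flag `Y_0 + ⋯ + Y_n` by one step. -/
lemma tridiagonal_apply_mem {Y : ℤ → Submodule K V} {d : ℤ}
    (hY : ∀ i : ℤ, i < 0 ∨ d < i → Y i = ⊥) {T : Module.End K V}
    (hT : ∀ i : ℤ, Submodule.map T (Y i) ≤ Y (i-1) ⊔ Y i ⊔ Y (i+1)) (n : ℤ)
    {v : V} (hv : v ∈ ⨆ k ∈ Finset.Icc (0:ℤ) n, Y k) :
    T v ∈ ⨆ k ∈ Finset.Icc (0:ℤ) (n+1), Y k := by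
  have key : (⨆ k ∈ Finset.Icc (0:ℤ) n, Y k) ≤
      (⨆ k ∈ Finset.Icc (0:ℤ) (n+1), Y k).comap T := by
    refine iSup₂_le fun j hj => Submodule.map_le_iff_le_comap.1 ((hT j).trans ?_)
    have hj2 := (Finset.mem_Icc.1 hj).2
    exact sup_le (sup_le (le_flag hY (by omega)) (le_flag hY (by omega)))
      (le_flag hY (by omega))
  exact key hv

/-- If `T` acts on each `Y_i` as the scalar `t_i`, then `T - t_n` lowers the flag
`Y_0 + ⋯ + Y_n` by one step. -/
lemma sub_eigenvalue_apply_mem {Y : ℤ → Submodule K V} {d : ℤ}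
    (hY : ∀ i : ℤ, i < 0 ∨ d < i → Y i = ⊥) {T : Module.End K V} {t : ℤ → K}
    (hT : ∀ i : ℤ, 0 ≤ i → i ≤ d → ∀ v ∈ Y i, T v = t i • v) {n : ℤ} (hn : n ≤ d)
    {v : V} (hv : v ∈ ⨆ k ∈ Finset.Icc (0:ℤ) n, Y k) :
    T v - t n • v ∈ ⨆ k ∈ Finset.Icc (0:ℤ) (n-1), Y k := by
  have key : (⨆ k ∈ Finset.Icc (0:ℤ) n, Y k) ≤
      (⨆ k ∈ Finset.Icc (0:ℤ) (n-1), Y k).comap (T - t n • LinearMap.id) := by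
    refine iSup₂_le fun j hj x hx => ?_
    obtain ⟨hj1, hj2⟩ := Finset.mem_Icc.1 hj
    simp only [Submodule.mem_comap, LinearMap.sub_apply, LinearMap.smul_apply,
      LinearMap.id_apply]
    rw [hT j hj1 (by omega) x hx, ← sub_smul]
    rcases eq_or_lt_of_le hj2 with rfl | hlt
    · simp
    · exact Submodule.smul_mem _ _ (le_flag hY (by omega : j ≤ n - 1) hx)
  simpa using key hv

end Flag

/-! ### The `q`-Weyl relation and polynomials in one map -/

section Weyl

variable {K V : Type*} [Field K] [AddCommGroup V] [Module K V]

/-- The local form of the `q`-Weyl relation: `X` acts on the `b`-eigenvector `v` of `Y` as `b⁻¹`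
modulo the `q² b`-eigenspace of `Y`. -/
lemma qWeyl_of_apply_sub {q b : K} (hb : b ≠ 0) {X Y : Module.End K V} {v : V}
    (hv : Y v = b • v) (hu : Y (X v - b⁻¹ • v) = (q ^ 2 * b) • (X v - b⁻¹ • v)) :
    q ^ 2 • X (Y v) - Y (X v) = (q ^ 2 - 1) • v := by
  rw [map_sub, map_smul, hv, sub_eq_iff_eq_add] at hu
  rw [hu, hv, map_smul]
  match_scalars <;> field_simp <;> ring

/-- If `T` preserves `W` and can be moved past `B` as in `hrel`, then `T` preserves the sum of all
`B^k W`. -/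
lemma invariant_iSup_map_pow {B T : Module.End K V} {a b : K}
    (hrel : ∀ v, T (B v) = a • B (T v) + b • v) {W : Submodule K V}
    (hW : ∀ w ∈ W, T w ∈ W) {v : V} (hv : v ∈ ⨆ k : ℕ, W.map (B ^ k)) :
    T v ∈ ⨆ k : ℕ, W.map (B ^ k) := by
  have hmem : ∀ (k : ℕ), ∀ w ∈ W, (B ^ k) w ∈ ⨆ k : ℕ, W.map (B ^ k) := fun k w hw =>
    Submodule.mem_iSup_of_mem k (Submodule.mem_map_of_mem hw)
  have hB : (⨆ k : ℕ, W.map (B ^ k)) ≤ (⨆ k : ℕ, W.map (B ^ k)).comap B := by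
    refine iSup_le fun k => ?_
    rintro _ ⟨w, hw, rfl⟩
    have := hmem (k+1) w hw
    rwa [pow_succ'] at this
  have key : (⨆ k : ℕ, W.map (B ^ k)) ≤ (⨆ k : ℕ, W.map (B ^ k)).comap T := by
    refine iSup_le fun k => ?_
    rintro _ ⟨w, hw, rfl⟩
    rw [Submodule.mem_comap]
    induction k with
    | zero => exact hmem 0 _ (hW w hw)
    | succ k ih =>
      rw [pow_succ', Module.End.mul_apply, hrel]
      exact add_mem (Submodule.smul_mem _ _ (hB ih)) (Submodule.smul_mem _ _ (hmem k w hw))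
  exact key hv

lemma mem_range_sub_of_eigen {A : Module.End K V} {s t : K} (hst : s ≠ t) {v : V}
    (hv : A v = s • v) : v ∈ LinearMap.range (A - t • LinearMap.id) := by
  refine ⟨(s - t)⁻¹ • v, ?_⟩
  simp only [LinearMap.sub_apply, LinearMap.smul_apply, LinearMap.id_apply, map_smul]
  rw [hv, ← sub_smul, smul_smul, inv_mul_cancel₀ (sub_ne_zero.2 hst),
    one_smul]

lemma aeval_apply_of_eigen {A : Module.End K V} {s : K} {v : V} (hv : A v = s • v)
    (p : Polynomial K) : Polynomial.aeval A p v = p.eval s • v := by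
  induction p using Polynomial.induction_on' with
  | add p r hp hr => rw [map_add, LinearMap.add_apply, hp, hr, Polynomial.eval_add, add_smul]
  | monomial n a =>
    have : ∀ n : ℕ, (A ^ n) v = s ^ n • v := by
      intro n
      induction n with
      | zero => simp
      | succ n ih => rw [pow_succ', Module.End.mul_apply, ih, map_smul, hv, smul_smul, pow_succ]
    rw [Polynomial.aeval_monomial, Polynomial.eval_monomial, Module.End.mul_apply, this,
      Module.algebraMap_end_apply, smul_smul]

lemma aeval_apply_mem {A : Module.End K V} {W : Submodule K V} (hW : ∀ w ∈ W, A w ∈ W)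
    (p : Polynomial K) {w : V} (hw : w ∈ W) : Polynomial.aeval A p w ∈ W := by
  induction p using Polynomial.induction_on' with
  | add p r hp hr =>
    rw [map_add, LinearMap.add_apply]
    exact add_mem hp hr
  | monomial n a =>
    have : ∀ n : ℕ, (A ^ n) w ∈ W := by
      intro n
      induction n with
      | zero => simpa using hw
      | succ n ih =>
        rw [pow_succ', Module.End.mul_apply]
        exact hW _ ih
    rw [Polynomial.aeval_monomial, Module.End.mul_apply, Module.algebraMap_end_apply]
    exact W.smul_mem _ (this n)

end Weyl

/-! ### Nonzero submodules contain the last eigenspace -/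

theorem stmt_17
    {𝕂 : Type*} [Field 𝕂] [IsAlgClosed 𝕂]
    {V : Type*} [AddCommGroup V] [Module 𝕂 V] [FiniteDimensional 𝕂 V]
    (hV : 0 < Module.finrank 𝕂 V)
    {q : 𝕂} (hq0 : q ≠ 0) (hqru : ∀ n : ℕ, 0 < n → q ^ n ≠ 1)
    {c : 𝕂} (hc : c ≠ 0)
    (A Astar : Module.End 𝕂 V)
    (d : ℤ) (hd : 0 ≤ d)
    (Vs Vst : ℤ → Submodule 𝕂 V)
    (hVout : ∀ i : ℤ, i < 0 ∨ d < i → Vs i = ⊥)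
    (hVstout : ∀ i : ℤ, i < 0 ∨ d < i → Vst i = ⊥)
    (hVeig : ∀ i : ℤ, 0 ≤ i → i ≤ d → Vs i = Module.End.eigenspace A (q ^ (2*i - d)))
    (hVne : ∀ i : ℤ, 0 ≤ i → i ≤ d → Vs i ≠ ⊥)
    (hVtot : (⨆ i ∈ Finset.Icc (0:ℤ) d, Vs i) = ⊤)
    (hVsteig : ∀ i : ℤ, 0 ≤ i → i ≤ d →
      Vst i = Module.End.eigenspace Astar (q ^ (2*i - d) + c * q ^ (d - 2*i)))
    (hVstne : ∀ i : ℤ, 0 ≤ i → i ≤ d → Vst i ≠ ⊥)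
    (hVsttot : (⨆ i ∈ Finset.Icc (0:ℤ) d, Vst i) = ⊤)
    (htd1 : ∀ i : ℤ, Submodule.map Astar (Vs i) ≤ Vs (i-1) ⊔ Vs i ⊔ Vs (i+1))
    (htd2 : ∀ i : ℤ, Submodule.map A (Vst i) ≤ Vst (i-1) ⊔ Vst i ⊔ Vst (i+1))
    (hirr : ∀ W : Submodule 𝕂 V, Submodule.map A W ≤ W → Submodule.map Astar W ≤ W →
      W = ⊥ ∨ W = ⊤)
    (Ws : ℤ → Submodule 𝕂 V)
    (hWout : ∀ i : ℤ, i < 0 ∨ d < i → Ws i = ⊥)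
    (hWdef : ∀ i : ℤ, 0 ≤ i → i ≤ d →
      Ws i = (⨆ j ∈ Finset.Icc (0:ℤ) i, Vst j) ⊓ (⨆ j ∈ Finset.Icc (0:ℤ) (d - i), Vs j))
    (hWtot : (⨆ i ∈ Finset.Icc (0:ℤ) d, Ws i) = ⊤)
    (B : Module.End 𝕂 V)
    (hB : ∀ i : ℤ, 0 ≤ i → i ≤ d → ∀ v ∈ Ws i, B v = q ^ (2*i - d) • v)
    (At : Module.End 𝕂 V)
    (hAt : At = c⁻¹ • (Astar - B))
    :
    ∀ W : Submodule 𝕂 V, Submodule.map A W ≤ W → Submodule.map At W ≤ W → W ≠ ⊥ →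
      (∀ W' : Submodule 𝕂 V, W' ≤ W → Submodule.map A W' ≤ W' → Submodule.map At W' ≤ W' →
        W' = ⊥ ∨ W' = W) →
      Vs d ≤ W := by
  intro W hWA hWAt hW0 _
  have hA : ∀ i : ℤ, 0 ≤ i → i ≤ d → ∀ v ∈ Vs i, A v = q ^ (2*i - d) • v := by
    intro i h0 h1 v hv
    rw [hVeig i h0 h1] at hv
    exact Module.End.mem_eigenspace_iff.1 hv
  have hAst : ∀ i : ℤ, 0 ≤ i → i ≤ d → ∀ v ∈ Vst i,
      Astar v = (q ^ (2*i - d) + c * q ^ (d - 2*i)) • v := by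
    intro i h0 h1 v hv
    rw [hVsteig i h0 h1] at hv
    exact Module.End.mem_eigenspace_iff.1 hv
  -- The description of `B` on the split components, extended to the two empty ones next to the
  -- ends, where the intersection is zero.
  have hB' : ∀ i : ℤ, -1 ≤ i → i ≤ d + 1 → ∀ v,
      v ∈ (⨆ j ∈ Finset.Icc (0:ℤ) i, Vst j) → v ∈ (⨆ j ∈ Finset.Icc (0:ℤ) (d - i), Vs j) →
      B v = q ^ (2*i - d) • v := by
    intro i h0 h1 v hv1 hv2
    by_cases hi0 : i < 0
    · rw [Finset.Icc_eq_empty (by omega)] at hv1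
      have : v = 0 := by simpa using hv1
      simp [this]
    by_cases hi1 : d < i
    · rw [Finset.Icc_eq_empty (by omega : ¬ (0:ℤ) ≤ d - i)] at hv2
      have : v = 0 := by simpa using hv2
      simp [this]
    exact hB i (by omega) (by omega) v (by
      rw [hWdef i (by omega) (by omega)]
      exact ⟨hv1, hv2⟩)
  have hinv : ∀ i : ℤ, (q ^ (2*i - d))⁻¹ = q ^ (d - 2*i) := by
    intro i
    rw [← zpow_neg]
    congr 1
    ring
  have hshift : ∀ i : ℤ, q ^ 2 * q ^ (2*i - d) = q ^ (2*(i+1) - d) := by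
    intro i
    rw [← zpow_natCast, ← zpow_add₀ hq0]
    congr 1
    push_cast
    ring
  have hext : ∀ f : Module.End 𝕂 V, (∀ i : ℤ, 0 ≤ i → i ≤ d → ∀ v ∈ Ws i, f v = 0) →
      ∀ v, f v = 0 := by
    intro f hf v
    have hle : (⊤ : Submodule 𝕂 V) ≤ LinearMap.ker f := by
      rw [← hWtot]
      refine iSup₂_le fun i hi x hx => ?_
      obtain ⟨h0, h1⟩ := Finset.mem_Icc.1 hi
      exact hf i h0 h1 x hx
    exact hle (Submodule.mem_top (x := v))
  have relA : ∀ v, q ^ 2 • A (B v) - B (A v) = (q ^ 2 - 1) • v := by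
    intro v
    refine sub_eq_zero.1 (hext (q ^ 2 • (A * B) - B * A - (q ^ 2 - 1) • LinearMap.id) ?_ v)
    intro i h0 h1 v hv
    have hBv := hB i h0 h1 v hv
    rw [hWdef i h0 h1] at hv
    refine sub_eq_zero.2 (qWeyl_of_apply_sub (zpow_ne_zero _ hq0) hBv ?_)
    rw [hshift, hinv]
    apply hB' (i+1) (by omega) (by omega)
    · exact sub_mem (tridiagonal_apply_mem hVstout htd2 i hv.1)
        (Submodule.smul_mem _ _ (flag_mono Vst (by omega) hv.1))
    · have := sub_eigenvalue_apply_mem hVout hA (by omega : d - i ≤ d) hv.2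
      rw [show 2 * (d - i) - d = d - 2*i by ring, show d - i - 1 = d - (i+1) by ring] at this
      exact this
  have relAt : ∀ v, q ^ 2 • B (At v) - At (B v) = (q ^ 2 - 1) • v := by
    intro v
    refine sub_eq_zero.1 (hext (q ^ 2 • (B * At) - At * B - (q ^ 2 - 1) • LinearMap.id) ?_ v)
    intro i h0 h1 v hv
    have hBv := hB i h0 h1 v hv
    rw [hWdef i h0 h1] at hv
    -- The lowering part of `At` on the `i`-th split component.
    have hu : B (Astar v - (q ^ (2*i - d) + c * q ^ (d - 2*i)) • v) =
        q ^ (2*(i-1) - d) • (Astar v - (q ^ (2*i - d) + c * q ^ (d - 2*i)) • v) := by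
      apply hB' (i-1) (by omega) (by omega)
      · exact sub_eigenvalue_apply_mem (t := fun i => q ^ (2*i - d) + c * q ^ (d - 2*i))
          hVstout hAst h1 hv.1
      · have := tridiagonal_apply_mem hVout htd1 (d - i) hv.2
        rw [show d - i + 1 = d - (i-1) by ring] at this
        exact sub_mem this (Submodule.smul_mem _ _ (flag_mono Vs (by omega) hv.2))
    have hs := hshift (i-1)
    rw [sub_add_cancel] at hs
    have hAtv : ∀ x, At x = c⁻¹ • (Astar x - B x) := by
      intro x
      rw [hAt]
      rfl
    have hbb : q ^ (2*i - d) * q ^ (d - 2*i) = 1 := by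
      rw [← hinv, mul_inv_cancel₀ (zpow_ne_zero _ hq0)]
    have hAtv' : At v = q ^ (d - 2*i) • v
        + c⁻¹ • (Astar v - (q ^ (2*i - d) + c * q ^ (d - 2*i)) • v) := by
      rw [hAtv, hBv]
      match_scalars <;> field_simp
      ring
    refine sub_eq_zero.2 ?_
    change q ^ 2 • B (At v) - At (B v) = (q ^ 2 - 1) • v
    rw [hBv, map_smul, hAtv', map_add, map_smul, map_smul, hu, hBv, ← hs]
    generalize Astar v - (_ : 𝕂) • v = u
    rw [← hs] at hbb
    match_scalars
    · linear_combination (q ^ 2 - 1) * hbb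
    · ring
  have hWA' : ∀ w ∈ W, A w ∈ W := fun w hw => hWA (Submodule.mem_map_of_mem hw)
  have hWAt' : ∀ w ∈ W, At w ∈ W := fun w hw => hWAt (Submodule.mem_map_of_mem hw)
  have hq2 : q ^ 2 ≠ 0 := pow_ne_zero _ hq0
  have hSA : ∀ v ∈ ⨆ k : ℕ, W.map (B ^ k), A v ∈ ⨆ k : ℕ, W.map (B ^ k) := fun v hv =>
    invariant_iSup_map_pow (a := (q ^ 2)⁻¹) (b := (q ^ 2)⁻¹ * (q ^ 2 - 1)) (fun x => by
      rw [mul_smul, ← relA x, ← smul_add, add_sub_cancel, smul_smul, inv_mul_cancel₀ hq2,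
        one_smul]) hWA' hv
  have hSAt : ∀ v ∈ ⨆ k : ℕ, W.map (B ^ k), At v ∈ ⨆ k : ℕ, W.map (B ^ k) := fun v hv =>
    invariant_iSup_map_pow (a := q ^ 2) (b := -(q ^ 2 - 1)) (fun x => by
      rw [neg_smul, ← relAt x, neg_sub, add_sub_cancel]) hWAt' hv
  have hSB : ∀ v ∈ ⨆ k : ℕ, W.map (B ^ k), B v ∈ ⨆ k : ℕ, W.map (B ^ k) := by
    have : (⨆ k : ℕ, W.map (B ^ k)) ≤ (⨆ k : ℕ, W.map (B ^ k)).comap B := by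
      refine iSup_le fun k => ?_
      rintro _ ⟨w, hw, rfl⟩
      refine Submodule.mem_iSup_of_mem (k+1) ⟨w, hw, ?_⟩
      rw [pow_succ', Module.End.mul_apply]
    exact this
  have hStop : (⨆ k : ℕ, W.map (B ^ k)) = ⊤ := by
    refine (hirr _ ?_ ?_).resolve_left ?_
    · rintro _ ⟨v, hv, rfl⟩
      exact hSA v hv
    · rintro _ ⟨v, hv, rfl⟩
      have : Astar v = c • At v + B v := by
        rw [hAt, LinearMap.smul_apply, smul_smul, mul_inv_cancel₀ hc, one_smul,
          LinearMap.sub_apply, sub_add_cancel]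
      rw [this]
      exact add_mem (Submodule.smul_mem _ _ (hSAt v hv)) (hSB v hv)
    · intro hbot
      apply hW0
      rw [eq_bot_iff, ← hbot]
      exact le_iSup_of_le 0 (by rw [pow_zero, Module.End.one_eq_id, Submodule.map_id])
  -- `B` acts as `q^(-d)` on the quotient of `V` by the range of `A - q^d`.
  have hBU : ∀ v, B v - q ^ (-d) • v ∈ LinearMap.range (A - q ^ d • LinearMap.id) := by
    have key : (⊤ : Submodule 𝕂 V) ≤ (LinearMap.range (A - q ^ d • LinearMap.id)).comap
        (B - q ^ (-d) • LinearMap.id) := by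
      rw [← hVtot]
      refine iSup₂_le fun i hi v hv => ?_
      obtain ⟨h0, h1⟩ := Finset.mem_Icc.1 hi
      have hAv := hA i h0 h1 v hv
      have h2 : A (B v - q ^ (d - 2*i) • v) = q ^ (2*(i-1) - d) • (B v - q ^ (d - 2*i) • v) := by
        have hr := relA v
        have hs := hshift (i-1)
        have hbb : q ^ (2*i - d) * q ^ (d - 2*i) = 1 := by
          rw [← hinv, mul_inv_cancel₀ (zpow_ne_zero _ hq0)]
        rw [sub_add_cancel] at hs
        rw [hAv, map_smul, sub_eq_iff_eq_add] at hr
        apply smul_right_injective V hq2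
        simp only
        rw [map_sub, smul_sub, hr, map_smul, hAv, ← hs]
        rw [← hs] at hbb
        match_scalars
        · linear_combination (1 - q ^ 2) * hbb
        · ring
      have hne : q ^ (2*(i-1) - d) ≠ q ^ d := fun h => by
        have := zpow_inj_of_not_root_s17 hq0 hqru h
        omega
      have e : B v - q ^ (-d) • v =
          (B v - q ^ (d - 2*i) • v) + (q ^ (d - 2*i) - q ^ (-d)) • v := by
        rw [sub_smul]
        abel
      change B v - q ^ (-d) • v ∈ LinearMap.range (A - q ^ d • LinearMap.id)
      rw [e]
      refine add_mem (mem_range_sub_of_eigen hne h2) ?_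
      rcases eq_or_lt_of_le h1 with rfl | hlt
      · rw [show i - 2 * i = -i by ring, sub_self, zero_smul]
        exact zero_mem _
      · refine Submodule.smul_mem _ _ (mem_range_sub_of_eigen (fun h => ?_) hAv)
        have := zpow_inj_of_not_root_s17 hq0 hqru h
        omega
    exact fun v => key (Submodule.mem_top (x := v))
  have hWU : W ⊔ LinearMap.range (A - q ^ d • LinearMap.id) = ⊤ := by
    rw [eq_top_iff, ← hStop]
    refine iSup_le fun k => ?_
    rintro _ ⟨w, hw, rfl⟩
    induction k with
    | zero => exact Submodule.mem_sup_left hw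
    | succ k ih =>
      rw [pow_succ', Module.End.mul_apply, ← sub_add_cancel (B _) (q ^ (-d) • (B ^ k) w)]
      exact add_mem (Submodule.mem_sup_right (hBU _)) (Submodule.smul_mem _ _ ih)
  intro v hv
  have hAv := hA d hd le_rfl v hv
  obtain ⟨w, hw, _, ⟨x, rfl⟩, hsum⟩ := Submodule.mem_sup.1
    (hWU ▸ Submodule.mem_top : v ∈ W ⊔ LinearMap.range (A - q ^ d • LinearMap.id))
  -- This polynomial in `A` is a nonzero multiple of the projection onto `Vs d`.
  set p : Polynomial 𝕂 :=
    ∏ j ∈ Finset.Ico (0:ℤ) d, (Polynomial.X - Polynomial.C (q ^ (2*j - d))) with hp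
  have hpx : Polynomial.aeval A p ((A - q ^ d • LinearMap.id : Module.End 𝕂 V) x) = 0 := by
    have key : (⊤ : Submodule 𝕂 V) ≤
        LinearMap.ker (Polynomial.aeval A p * (A - q ^ d • LinearMap.id)) := by
      rw [← hVtot]
      refine iSup₂_le fun i hi y hy => ?_
      obtain ⟨h0, h1⟩ := Finset.mem_Icc.1 hi
      have hAy := hA i h0 h1 y hy
      rw [LinearMap.mem_ker, Module.End.mul_apply, LinearMap.sub_apply, LinearMap.smul_apply,
        LinearMap.id_apply, hAy, ← sub_smul, map_smul, aeval_apply_of_eigen hAy]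
      rcases eq_or_lt_of_le h1 with rfl | hlt
      · rw [show 2 * i - i = i by ring, sub_self, zero_smul]
      · have : p.eval (q ^ (2*i - d)) = 0 := by
          rw [hp, Polynomial.eval_prod]
          exact Finset.prod_eq_zero (Finset.mem_Ico.2 ⟨h0, hlt⟩) (by simp)
        rw [this, zero_smul, smul_zero]
    exact key (Submodule.mem_top (x := x))
  have hpd : p.eval (q ^ (2*d - d)) ≠ 0 := by
    rw [hp, Polynomial.eval_prod]
    refine Finset.prod_ne_zero_iff.2 fun j hj => ?_
    simp only [Polynomial.eval_sub, Polynomial.eval_X, Polynomial.eval_C]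
    refine sub_ne_zero.2 fun h => ?_
    have := zpow_inj_of_not_root_s17 hq0 hqru h
    have := (Finset.mem_Ico.1 hj).2
    omega
  have hpv : p.eval (q ^ (2*d - d)) • v = Polynomial.aeval A p w := by
    rw [← aeval_apply_of_eigen hAv, ← hsum, map_add, hpx, add_zero]
  refine (Submodule.smul_mem_iff W hpd).1 ?_
  rw [hpv]
  exact aeval_apply_mem hWA' p hw
end
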